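/- For every x ∈ ℝ ∖ {0}, the function u defined by u(t, x) = F_p(t, Δ(t, x)) for x > 0 and u(t, x) = −F_p(t, Δ(t, −x)) for x < 0 satisfies lim_{t → +∞} u(t, x) = −sgn(x) √(2(1 − g(x))); explicitly, the limit equals −sgn(x) √2 (1 − x²)² if |x| ≤ 1 and equals 0 if |x| > 1. -/

import Mathlib

open Real Set Filter MeasureTheory
open scoped Topology

/-- The potential `g` from the Hamiltonian `H(x,p) = p²/2 + g(x)`. -/
noncomputable def g (x : ℝ) : ℝ := if |x| ≤ 1 then 1 - (1 - x ^ 2) ^ 4 else 1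

/-- The derivative of `g`. -/
noncomputable def g' (x : ℝ) : ℝ := if |x| ≤ 1 then 8 * x * (1 - x ^ 2) ^ 3 else 0

/-- `(q, p)` is a (global) solution of the Hamiltonian system (HS): `q̇ = p`, `ṗ = -g'(q)`. -/
def IsHSSol (q p : ℝ → ℝ) : Prop :=
  (∀ t : ℝ, HasDerivAt q (p t) t) ∧ (∀ t : ℝ, HasDerivAt p (-(g' (q t))) t)

/-- `F` is the flow of (HS): `F t q₀ p₀ = (q t, p t)` for the solution with data `(q₀, p₀)`. -/
def IsHSFlow (F : ℝ → ℝ → ℝ → ℝ × ℝ) : Prop :=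
  ∀ q₀ p₀ : ℝ,
    IsHSSol (fun t => (F t q₀ p₀).1) (fun t => (F t q₀ p₀).2) ∧ F 0 q₀ p₀ = (q₀, p₀)

/-- The set `([0,∞) × {2}) ∪ ({0} × (0,2])`, codomain of the map `Δ`. -/
def Dset : Set (ℝ × ℝ) := (Ici (0:ℝ) ×ˢ ({2} : Set ℝ)) ∪ ({(0:ℝ)} ×ˢ Ioc (0:ℝ) 2)

/-- `T` is the smallest positive period of `q`. -/
def IsSmallestPeriod (q : ℝ → ℝ) (T : ℝ) : Prop :=
  0 < T ∧ Function.Periodic q T ∧ ∀ T' : ℝ, 0 < T' → Function.Periodic q T' → T ≤ T'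

/-- `T` is the period map `𝒯`, assigning to `p₀ ∈ (0, √2)` the smallest positive period of
the `q`-component of the solution of (HS) with initial datum `(0, p₀)`. -/
def IsPeriodMap (F : ℝ → ℝ → ℝ → ℝ × ℝ) (T : ℝ → ℝ) : Prop :=
  ∀ p₀ ∈ Ioo (0:ℝ) (Real.sqrt 2), IsSmallestPeriod (fun t => (F t 0 p₀).1) (T p₀)

/-- `Δ` associates to `(t,x)` the datum in `Dset` whose orbit stays positive on `(0,t)`
and reaches `x` at time `t`. -/
def IsDeltaMap (F : ℝ → ℝ → ℝ → ℝ × ℝ) (Δ : ℝ → ℝ → ℝ × ℝ) : Prop :=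
  ∀ t x : ℝ, 0 < t → 0 < x →
    Δ t x ∈ Dset ∧ (F t (Δ t x).1 (Δ t x).2).1 = x ∧
      ∀ s ∈ Ioo (0:ℝ) t, 0 < (F s (Δ t x).1 (Δ t x).2).1

/-- The solution `u` of the conservation law built from the flow `F` and the map `Δ`
(extended by `0` at `x = 0`). -/
noncomputable def usol (F : ℝ → ℝ → ℝ → ℝ × ℝ) (Δ : ℝ → ℝ → ℝ × ℝ) (t x : ℝ) : ℝ :=
  if 0 < x then (F t (Δ t x).1 (Δ t x).2).2
  else if x < 0 then -(F t (Δ t (-x)).1 (Δ t (-x)).2).2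
  else 0

/-!
Let `V ≤ E` be a potential whose slope at `x ≥ 0` is at least `c * x * (E - V x)`, and consider
trajectories that stay in `[0, ∞)` up to time `t`, start with momentum in `(0, K]` and sit at
`x > 0` at time `t`.

* If the energy exceeds `E` by `e`, the momentum never drops below `√(2 * e)`, so
  `√(2 * e) * t ≤ x`.
* If `V` stays below `E - e` along the trajectory, then, the position being concave in time and
  hence above the chord `s ↦ x * (s / t)`, the force costs the trajectory a momentum of at least
  `c * e * x / 2 * t`. This happens when the energy is at most `E - e`. It also happens, with
  `e = E - V x`, when the final momentum is nonnegative, because then the position increases up to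
  time `t`.

As `t → ∞` these bounds force the energy to `E`, which gives the modulus of the final momentum, and
make the final momentum negative when `V x < E`. The potential `g` is of this kind with
`E = 1` and `c = 8`, since `g' x = 8 * x * m ^ 3` and `1 - g x = m ^ 4` with
`m = max (1 - x ^ 2) 0 ≤ 1`.
-/

/-! ### Calculus on the real line -/

theorem monotoneOn_of_hasDerivAt_nonneg {D : Set ℝ} (hD : Convex ℝ D) {f f' : ℝ → ℝ}
    (hf : ∀ x ∈ D, HasDerivAt f (f' x) x) (hf' : ∀ x ∈ D, 0 ≤ f' x) : MonotoneOn f D :=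
  monotoneOn_of_hasDerivWithinAt_nonneg hD (HasDerivAt.continuousOn hf)
    (fun x hx => (hf x (interior_subset hx)).hasDerivWithinAt)
    fun x hx => hf' x (interior_subset hx)

theorem antitoneOn_of_hasDerivAt_nonpos {D : Set ℝ} (hD : Convex ℝ D) {f f' : ℝ → ℝ}
    (hf : ∀ x ∈ D, HasDerivAt f (f' x) x) (hf' : ∀ x ∈ D, f' x ≤ 0) : AntitoneOn f D :=
  antitoneOn_of_hasDerivWithinAt_nonpos hD (HasDerivAt.continuousOn hf)
    (fun x hx => (hf x (interior_subset hx)).hasDerivWithinAt)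
    fun x hx => hf' x (interior_subset hx)

theorem mul_div_le_of_concaveOn_Icc {f : ℝ → ℝ} {s t : ℝ} (hf : ConcaveOn ℝ (Icc 0 t) f)
    (hf0 : 0 ≤ f 0) (ht : 0 < t) (hs : s ∈ Icc 0 t) : f t * (s / t) ≤ f s := by
  have hst : s / t ≤ 1 := (div_le_one ht).2 hs.2
  calc f t * (s / t) ≤ (1 - s / t) * f 0 + s / t * f t := by
        linarith [mul_nonneg (sub_nonneg.2 hst) hf0]
    _ ≤ f ((1 - s / t) * 0 + s / t * t) :=
        hf.2 (left_mem_Icc.2 ht.le) (right_mem_Icc.2 ht.le) (sub_nonneg.2 hst)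
          (div_nonneg hs.1 ht.le) (sub_add_cancel _ _)
    _ = f s := by rw [mul_zero, zero_add, div_mul_cancel₀ _ ht.ne']

theorem hasDerivAt_max_zero_pow (n : ℕ) (y : ℝ) :
    HasDerivAt (fun z : ℝ => max z 0 ^ (n + 2)) ((n + 2) * max y 0 ^ (n + 1)) y := by
  refine hasDerivAt_of_hasDerivAt_of_ne' (x := 0)
    (g := fun z : ℝ => (n + 2) * max z 0 ^ (n + 1)) (fun z hz => ?_) (by fun_prop) (by fun_prop) y
  rcases hz.lt_or_gt with hneg | hpos
  · have hzero : (fun w : ℝ => max w 0 ^ (n + 2)) =ᶠ[𝓝 z] fun _ => 0 := by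
      filter_upwards [Iio_mem_nhds hneg] with w hw
      rw [max_eq_right (le_of_lt hw), zero_pow (by omega)]
    simpa [max_eq_right hneg.le] using (hasDerivAt_const z (0 : ℝ)).congr_of_eventuallyEq hzero
  · have hpow : (fun w : ℝ => max w 0 ^ (n + 2)) =ᶠ[𝓝 z] fun w => w ^ (n + 2) := by
      filter_upwards [Ioi_mem_nhds hpos] with w hw
      rw [max_eq_left (le_of_lt hw)]
    simpa [max_eq_left hpos.le] using (hasDerivAt_pow (n + 2) z).congr_of_eventuallyEq hpow

/-! ### Trajectories of a one-dimensional Hamiltonian system -/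

/-- `(q, p)` is a global solution of `q̇ = p`, `ṗ = -f(q)`, where `f` stands for the derivative of
a potential. The system (HS) is the case `f = g'`. -/
structure IsTrajectory (f q p : ℝ → ℝ) : Prop where
  hasDerivAt_position : ∀ t, HasDerivAt q (p t) t
  hasDerivAt_momentum : ∀ t, HasDerivAt p (-f (q t)) t

namespace IsTrajectory

variable {f V V' q p : ℝ → ℝ} {D : Set ℝ} {E e r : ℝ}

theorem energy_eq (hV : ∀ x, HasDerivAt V (V' x) x) (h : IsTrajectory V' q p) (s t : ℝ) :
    p s ^ 2 / 2 + V (q s) = p t ^ 2 / 2 + V (q t) := by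
  have hderiv (r : ℝ) : HasDerivAt (fun r => p r ^ 2 / 2 + V (q r)) 0 r := by
    have hkinetic := ((h.hasDerivAt_momentum r).pow 2).div_const 2
    have hpotential := (hV (q r)).comp r (h.hasDerivAt_position r)
    refine (hkinetic.add hpotential).congr_deriv ?_
    push_cast
    ring
  exact is_const_of_deriv_eq_zero (fun r => (hderiv r).differentiableAt)
    (fun r => (hderiv r).deriv) s t

theorem monotoneOn_position (h : IsTrajectory f q p) (hD : Convex ℝ D) (hp : ∀ s ∈ D, 0 ≤ p s) :
    MonotoneOn q D :=
  monotoneOn_of_hasDerivAt_nonneg hD (fun s _ => h.hasDerivAt_position s) hp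

theorem antitoneOn_momentum (h : IsTrajectory f q p) (hD : Convex ℝ D)
    (hf : ∀ s ∈ D, 0 ≤ f (q s)) : AntitoneOn p D :=
  antitoneOn_of_hasDerivAt_nonpos hD (fun s _ => h.hasDerivAt_momentum s)
    fun s hs => neg_nonpos.2 (hf s hs)

theorem concaveOn_position (h : IsTrajectory f q p) (hD : Convex ℝ D)
    (hf : ∀ s ∈ D, 0 ≤ f (q s)) : ConcaveOn ℝ D q := by
  have hderiv : deriv q = p := funext fun s => (h.hasDerivAt_position s).deriv
  refine AntitoneOn.concaveOn_of_deriv hD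
    (HasDerivAt.continuousOn fun s _ => h.hasDerivAt_position s)
    (fun s _ => (h.hasDerivAt_position s).differentiableAt.differentiableWithinAt) ?_
  rw [hderiv]
  exact (h.antitoneOn_momentum hD hf).mono interior_subset

theorem sqrt_le_momentum_of_le_energy (hV : ∀ x, HasDerivAt V (V' x) x) (hVE : ∀ x, V x ≤ E)
    (h : IsTrajectory V' q p) (hp : 0 < p 0) (he : 0 < e) (hE : E + e ≤ p r ^ 2 / 2 + V (q r))
    (s : ℝ) : √(2 * e) ≤ p s := by
  have hsq (s : ℝ) : 2 * e ≤ p s ^ 2 := by linarith [h.energy_eq hV s r, hVE (q s)]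
  have hcont : Continuous p :=
    continuous_iff_continuousAt.2 fun s => (h.hasDerivAt_momentum s).continuousAt
  have hpos : 0 < p s := by
    by_contra! hs
    obtain ⟨z, hz⟩ := mem_range_of_exists_le_of_exists_ge hcont ⟨s, hs⟩ ⟨0, hp.le⟩
    have hz_sq := hsq z
    rw [hz] at hz_sq
    linarith
  exact Real.sqrt_le_iff.2 ⟨hpos.le, hsq s⟩

theorem sqrt_mul_le_displacement_of_le_energy (hV : ∀ x, HasDerivAt V (V' x) x)
    (hVE : ∀ x, V x ≤ E) (h : IsTrajectory V' q p) (hp : 0 < p 0) (he : 0 < e)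
    (hE : E + e ≤ p r ^ 2 / 2 + V (q r)) {t : ℝ} (ht : 0 ≤ t) : √(2 * e) * t ≤ q t - q 0 := by
  have hderiv (s : ℝ) : √(2 * e) ≤ deriv q s :=
    (h.sqrt_le_momentum_of_le_energy hV hVE hp he hE s).trans_eq
      (h.hasDerivAt_position s).deriv.symm
  simpa only [sub_zero] using mul_sub_le_image_sub_of_le_deriv
    (fun s => (h.hasDerivAt_position s).differentiableAt) hderiv ht

end IsTrajectory

/-! ### Restoring potentials and arcs ending at a given point -/

/-- A potential `V` with derivative `V'` that lies below the level `E` and whose slope on `[0, ∞)`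
is bounded below in terms of the gap to this level: a particle at `x > 0` with `V x < E` is pushed
back towards the origin, at a quantitative rate. -/
structure IsRestoringPotential (V V' : ℝ → ℝ) (E c : ℝ) : Prop where
  hasDerivAt : ∀ x, HasDerivAt V (V' x) x
  le_level : ∀ x, V x ≤ E
  rate_pos : 0 < c
  mul_gap_le_slope : ∀ x, 0 ≤ x → c * x * (E - V x) ≤ V' x

/-- `(q, p)` is a trajectory that starts with momentum in `(0, K]`, stays in `[0, ∞)` during
`[0, t]` and is at `x` at the time `t > 0`. -/
structure IsArcTo (f : ℝ → ℝ) (K x t : ℝ) (q p : ℝ → ℝ) : Prop extends IsTrajectory f q p where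
  time_pos : 0 < t
  nonneg : ∀ s ∈ Icc 0 t, 0 ≤ q s
  initial_momentum_mem : p 0 ∈ Ioc 0 K
  final_position : q t = x

namespace IsRestoringPotential

variable {V V' : ℝ → ℝ} {E c : ℝ}

theorem slope_nonneg (hV : IsRestoringPotential V V' E c) {x : ℝ} (hx : 0 ≤ x) : 0 ≤ V' x :=
  (mul_nonneg (mul_nonneg hV.rate_pos.le hx) (sub_nonneg.2 (hV.le_level x))).trans
    (hV.mul_gap_le_slope x hx)

theorem monotoneOn (hV : IsRestoringPotential V V' E c) : MonotoneOn V (Ici 0) :=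
  monotoneOn_of_hasDerivAt_nonneg (convex_Ici 0) (fun x _ => hV.hasDerivAt x)
    fun _ hx => hV.slope_nonneg hx

end IsRestoringPotential

namespace IsArcTo

variable {V V' q p : ℝ → ℝ} {E c K x t e : ℝ}

theorem slope_nonneg (h : IsArcTo V' K x t q p) (hV : IsRestoringPotential V V' E c) :
    ∀ s ∈ Icc 0 t, 0 ≤ V' (q s) :=
  fun s hs => hV.slope_nonneg (h.nonneg s hs)

theorem chord_le_position (h : IsArcTo V' K x t q p) (hV : IsRestoringPotential V V' E c) {s : ℝ}
    (hs : s ∈ Icc 0 t) : x * (s / t) ≤ q s := by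
  have hconcave := h.concaveOn_position (convex_Icc 0 t) (h.slope_nonneg hV)
  have hq0 : 0 ≤ q 0 := h.nonneg 0 (left_mem_Icc.2 h.time_pos.le)
  simpa only [h.final_position] using mul_div_le_of_concaveOn_Icc hconcave hq0 h.time_pos hs

theorem mul_time_le_momentum_loss (h : IsArcTo V' K x t q p)
    (hV : IsRestoringPotential V V' E c) (he : 0 ≤ e)
    (hgap : ∀ s ∈ Icc 0 t, V (q s) ≤ E - e) : c * e * x / 2 * t ≤ p 0 - p t := by
  have ht := h.time_pos
  have hforce : ∀ s ∈ Icc 0 t, c * (x * (s / t)) * e ≤ V' (q s) := fun s hs =>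
    calc c * (x * (s / t)) * e ≤ c * q s * e := by
          gcongr
          exacts [hV.rate_pos.le, h.chord_le_position hV hs]
      _ ≤ c * q s * (E - V (q s)) :=
          mul_le_mul_of_nonneg_left (by linarith [hgap s hs])
            (mul_nonneg hV.rate_pos.le (h.nonneg s hs))
      _ ≤ V' (q s) := hV.mul_gap_le_slope _ (h.nonneg s hs)
  have hderiv (s : ℝ) : HasDerivAt (fun s => p s + c * x * e / (2 * t) * s ^ 2)
      (-V' (q s) + c * (x * (s / t)) * e) s := by
    refine ((h.hasDerivAt_momentum s).add
      ((hasDerivAt_pow 2 s).const_mul (c * x * e / (2 * t)))).congr_deriv ?_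
    push_cast
    field_simp
  have hanti := antitoneOn_of_hasDerivAt_nonpos (convex_Icc 0 t) (fun s _ => hderiv s)
    fun s hs => by linarith [hforce s hs]
  have hloss : p t + c * x * e / (2 * t) * t ^ 2 ≤ p 0 + c * x * e / (2 * t) * 0 ^ 2 :=
    hanti (left_mem_Icc.2 ht.le) (right_mem_Icc.2 ht.le) ht.le
  have hquad : c * x * e / (2 * t) * t ^ 2 = c * e * x / 2 * t := by field_simp
  linarith

theorem sqrt_mul_time_le_of_le_energy (h : IsArcTo V' K x t q p)
    (hV : IsRestoringPotential V V' E c) (he : 0 < e) (hE : E + e ≤ p t ^ 2 / 2 + V x) :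
    √(2 * e) * t ≤ x := by
  rw [← h.final_position] at hE
  linarith [h.sqrt_mul_le_displacement_of_le_energy hV.hasDerivAt hV.le_level
    h.initial_momentum_mem.1 he hE h.time_pos.le, h.nonneg 0 (left_mem_Icc.2 h.time_pos.le),
    h.final_position]

theorem mul_time_le_of_energy_le (h : IsArcTo V' K x t q p)
    (hV : IsRestoringPotential V V' E c) (he : 0 ≤ e) (hE : p t ^ 2 / 2 + V x ≤ E - e) :
    c * e * x / 2 * t ≤ K + √(2 * (E - V x)) := by
  have hgap : ∀ s ∈ Icc 0 t, V (q s) ≤ E - e := fun s _ => by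
    have henergy := h.energy_eq hV.hasDerivAt s t
    rw [h.final_position] at henergy
    linarith [sq_nonneg (p s)]
  have hfinal : -√(2 * (E - V x)) ≤ p t := (abs_le.1 (Real.abs_le_sqrt (by linarith))).1
  linarith [h.mul_time_le_momentum_loss hV he hgap, h.initial_momentum_mem.2]

theorem mul_time_le_of_final_momentum_nonneg (h : IsArcTo V' K x t q p)
    (hV : IsRestoringPotential V V' E c) (hp : 0 ≤ p t) : c * (E - V x) * x / 2 * t ≤ K := by
  have ht : t ∈ Icc 0 t := right_mem_Icc.2 h.time_pos.le
  have hmomentum : ∀ s ∈ Icc 0 t, 0 ≤ p s := fun s hs =>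
    hp.trans (h.antitoneOn_momentum (convex_Icc 0 t) (h.slope_nonneg hV) hs ht hs.2)
  have hle : ∀ s ∈ Icc 0 t, q s ≤ x := fun s hs =>
    (h.monotoneOn_position (convex_Icc 0 t) hmomentum hs ht hs.2).trans_eq h.final_position
  have hgap : ∀ s ∈ Icc 0 t, V (q s) ≤ E - (E - V x) := fun s hs => by
    rw [sub_sub_cancel]
    exact hV.monotoneOn (h.nonneg s hs) ((h.nonneg s hs).trans (hle s hs)) (hle s hs)
  linarith [h.mul_time_le_momentum_loss hV (sub_nonneg.2 (hV.le_level x)) hgap,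
    h.initial_momentum_mem.2]

end IsArcTo

/-! ### Long arcs to a fixed point -/

namespace IsRestoringPotential

variable {V V' : ℝ → ℝ} {E c K x : ℝ} {q p : ℝ → ℝ → ℝ}

theorem tendsto_energy (hV : IsRestoringPotential V V' E c) (hx : 0 < x)
    (h : ∀ᶠ t in atTop, IsArcTo V' K x t (q t) (p t)) :
    Tendsto (fun t => p t t ^ 2 / 2 + V x) atTop (𝓝 E) := by
  refine tendsto_order.2 ⟨fun a ha => ?_, fun a ha => ?_⟩
  · have hrate : 0 < c * (E - a) * x / 2 :=
      half_pos (mul_pos (mul_pos hV.rate_pos (sub_pos.2 ha)) hx)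
    filter_upwards [h, (tendsto_id.const_mul_atTop hrate).eventually_gt_atTop
      (K + √(2 * (E - V x)))] with t harc hlong
    contrapose! hlong
    exact harc.mul_time_le_of_energy_le hV (sub_nonneg.2 ha.le) (by linarith)
  · have hrate : 0 < √(2 * (a - E)) := Real.sqrt_pos.2 (by linarith)
    filter_upwards [h, (tendsto_id.const_mul_atTop hrate).eventually_gt_atTop x]
      with t harc hlong
    contrapose! hlong
    exact harc.sqrt_mul_time_le_of_le_energy hV (sub_pos.2 ha) (by linarith)

theorem tendsto_abs_final_momentum (hV : IsRestoringPotential V V' E c) (hx : 0 < x)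
    (h : ∀ᶠ t in atTop, IsArcTo V' K x t (q t) (p t)) :
    Tendsto (fun t => |p t t|) atTop (𝓝 √(2 * (E - V x))) := by
  refine (((hV.tendsto_energy hx h).sub_const (V x)).const_mul 2).sqrt.congr fun t => ?_
  rw [← Real.sqrt_sq_eq_abs, add_sub_cancel_right, mul_div_cancel₀ _ two_ne_zero]

theorem eventually_final_momentum_neg (hV : IsRestoringPotential V V' E c) (hx : 0 < x)
    (hVx : V x < E) (h : ∀ᶠ t in atTop, IsArcTo V' K x t (q t) (p t)) :
    ∀ᶠ t in atTop, p t t < 0 := by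
  have hrate : 0 < c * (E - V x) * x / 2 :=
    half_pos (mul_pos (mul_pos hV.rate_pos (sub_pos.2 hVx)) hx)
  filter_upwards [h, (tendsto_id.const_mul_atTop hrate).eventually_gt_atTop K] with t harc hlong
  contrapose! hlong
  exact harc.mul_time_le_of_final_momentum_nonneg hV hlong

theorem tendsto_final_momentum (hV : IsRestoringPotential V V' E c) (hx : 0 < x)
    (h : ∀ᶠ t in atTop, IsArcTo V' K x t (q t) (p t)) :
    Tendsto (fun t => p t t) atTop (𝓝 (-√(2 * (E - V x)))) := by
  have habs := hV.tendsto_abs_final_momentum hx h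
  rcases (hV.le_level x).lt_or_eq with hlt | heq
  · refine habs.neg.congr' ?_
    filter_upwards [hV.eventually_final_momentum_neg hx hlt h] with t ht
    rw [abs_of_neg ht, neg_neg]
  · simp only [heq, sub_self, mul_zero, Real.sqrt_zero, neg_zero] at habs ⊢
    exact (tendsto_zero_iff_abs_tendsto_zero _).2 habs

end IsRestoringPotential

/-! ### The potential `g` -/

theorem g_eq_one_sub_max_pow (x : ℝ) : g x = 1 - max (1 - x ^ 2) 0 ^ 4 := by
  unfold g
  split_ifs with h <;> rw [← sq_le_one_iff_abs_le_one] at h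
  · rw [max_eq_left (sub_nonneg.2 h)]
  · rw [max_eq_right (by linarith)]
    norm_num

theorem g'_eq_mul_max_pow (x : ℝ) : g' x = 8 * x * max (1 - x ^ 2) 0 ^ 3 := by
  unfold g'
  split_ifs with h <;> rw [← sq_le_one_iff_abs_le_one] at h
  · rw [max_eq_left (sub_nonneg.2 h)]
  · rw [max_eq_right (by linarith)]
    norm_num

theorem hasDerivAt_g (x : ℝ) : HasDerivAt g (g' x) x := by
  have hinner : HasDerivAt (fun z : ℝ => 1 - z ^ 2) (-(2 * x)) x := by
    simpa using (hasDerivAt_pow 2 x).const_sub 1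
  rw [funext g_eq_one_sub_max_pow, g'_eq_mul_max_pow]
  refine (((hasDerivAt_max_zero_pow 2 _).comp x hinner).const_sub 1).congr_deriv ?_
  push_cast
  ring

theorem isRestoringPotential_g : IsRestoringPotential g g' 1 8 where
  hasDerivAt := hasDerivAt_g
  le_level x := by
    rw [g_eq_one_sub_max_pow]
    exact sub_le_self _ (by positivity)
  rate_pos := by norm_num
  mul_gap_le_slope x hx := by
    rw [g_eq_one_sub_max_pow, g'_eq_mul_max_pow, sub_sub_cancel]
    have hmax : max (1 - x ^ 2) 0 ≤ 1 := max_le (by linarith [sq_nonneg x]) zero_le_one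
    exact mul_le_mul_of_nonneg_left
      (pow_le_pow_of_le_one (le_max_right _ _) hmax (by norm_num)) (by positivity)

theorem g_neg (x : ℝ) : g (-x) = g x := by simp [g]

theorem sqrt_two_mul_one_sub_g_of_abs_le_one {x : ℝ} (hx : |x| ≤ 1) :
    √(2 * (1 - g x)) = √2 * (1 - x ^ 2) ^ 2 := by
  have hgap : 1 - g x = ((1 - x ^ 2) ^ 2) ^ 2 := by
    rw [g, if_pos hx]
    ring
  rw [hgap, Real.sqrt_mul zero_le_two, Real.sqrt_sq (sq_nonneg _)]

theorem sqrt_two_mul_one_sub_g_of_one_lt_abs {x : ℝ} (hx : 1 < |x|) : √(2 * (1 - g x)) = 0 := by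
  simp [g, hx.not_ge]

/-! ### The solution `usol` -/

theorem mem_Ici_prod_Ioc_of_mem_Dset {z : ℝ × ℝ} (hz : z ∈ Dset) : z ∈ Ici 0 ×ˢ Ioc 0 2 := by
  rcases hz with ⟨hfst, hsnd⟩ | ⟨hfst, hsnd⟩
  · exact ⟨hfst, by rw [mem_singleton_iff.1 hsnd]; norm_num⟩
  · exact ⟨(mem_singleton_iff.1 hfst).ge, hsnd⟩

section Solution

variable {F : ℝ → ℝ → ℝ → ℝ × ℝ} {Δ : ℝ → ℝ → ℝ × ℝ}

theorem isArcTo_of_isDeltaMap (hF : IsHSFlow F) (hΔ : IsDeltaMap F Δ) {t x : ℝ} (ht : 0 < t)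
    (hx : 0 < x) : IsArcTo g' 2 x t (fun s => (F s (Δ t x).1 (Δ t x).2).1)
      (fun s => (F s (Δ t x).1 (Δ t x).2).2) := by
  obtain ⟨hmem, hfinal, hpos⟩ := hΔ t x ht hx
  obtain ⟨⟨hq, hp⟩, hinit⟩ := hF (Δ t x).1 (Δ t x).2
  obtain ⟨hq0, hp0⟩ := mem_Ici_prod_Ioc_of_mem_Dset hmem
  refine ⟨⟨hq, hp⟩, ht, fun s hs => ?_, by simpa only [hinit] using hp0, hfinal⟩
  rcases hs.1.eq_or_lt with rfl | hs0
  · simpa only [hinit, mem_Ici] using hq0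
  rcases hs.2.eq_or_lt with rfl | hst
  · exact hx.le.trans_eq hfinal.symm
  · exact (hpos s ⟨hs0, hst⟩).le

theorem usol_neg (t x : ℝ) : usol F Δ t (-x) = -usol F Δ t x := by
  rcases lt_trichotomy x 0 with hx | rfl | hx <;> simp [usol, *, not_lt_of_gt]

theorem tendsto_usol_of_pos (hF : IsHSFlow F) (hΔ : IsDeltaMap F Δ) {x : ℝ} (hx : 0 < x) :
    Tendsto (fun t => usol F Δ t x) atTop (𝓝 (-√(2 * (1 - g x)))) := by
  simp only [usol, if_pos hx]
  exact isRestoringPotential_g.tendsto_final_momentum hx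
    ((eventually_gt_atTop 0).mono fun t ht => isArcTo_of_isDeltaMap hF hΔ ht hx)

theorem tendsto_usol_of_neg (hF : IsHSFlow F) (hΔ : IsDeltaMap F Δ) {x : ℝ} (hx : x < 0) :
    Tendsto (fun t => usol F Δ t x) atTop (𝓝 √(2 * (1 - g x))) := by
  simpa only [usol_neg, g_neg, neg_neg] using (tendsto_usol_of_pos hF hΔ (neg_pos.2 hx)).neg

end Solution

/-- Time asymptotics: for every `x ≠ 0`, `u(t,x) → -sgn(x) √(2(1 - g(x)))` as `t → +∞`;
explicitly this limit equals `-sgn(x) √2 (1-x²)²` for `|x| ≤ 1` and `0` for `|x| > 1`. -/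
theorem stmt_16 (F : ℝ → ℝ → ℝ → ℝ × ℝ) (hF : IsHSFlow F)
    (Δ : ℝ → ℝ → ℝ × ℝ) (hΔ : IsDeltaMap F Δ) :
    ∀ x : ℝ, x ≠ 0 →
      Tendsto (fun t => usol F Δ t x) atTop
        (𝓝 (-(Real.sign x) * Real.sqrt (2 * (1 - g x)))) ∧
      (|x| ≤ 1 →
        -(Real.sign x) * Real.sqrt (2 * (1 - g x))
          = -(Real.sign x) * Real.sqrt 2 * (1 - x ^ 2) ^ 2) ∧
      (1 < |x| → -(Real.sign x) * Real.sqrt (2 * (1 - g x)) = 0) := by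
  intro x hx
  refine ⟨?_, fun hle => ?_, fun hlt => ?_⟩
  · rcases hx.lt_or_gt with hneg | hpos
    · simpa only [Real.sign_of_neg hneg, neg_neg, one_mul] using tendsto_usol_of_neg hF hΔ hneg
    · simpa only [Real.sign_of_pos hpos, neg_one_mul] using tendsto_usol_of_pos hF hΔ hpos
  · rw [sqrt_two_mul_one_sub_g_of_abs_le_one hle, mul_assoc]
  · rw [sqrt_two_mul_one_sub_g_of_one_lt_abs hlt, mul_zero]
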